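/- Let Φ ∈ ℝ^{m×n} have restricted isometry constant δ_K < 1 of order K, let x ∈ ℝ^n be K-sparse with support T, |T| = K ≥ 1, and let y = Φx + v. Then max_{i ∈ {1,…,n}} |⟨φ_i, y⟩| ≥ (1/√K) · ((1 − δ_K)‖x‖₂ − √(1 + δ_K)·‖v‖₂). -/

import Mathlib

noncomputable section
open Finset

/-- `Vec n` is `ℝ^n` with the Euclidean (ℓ²) norm. -/
abbrev Vec (n : ℕ) := EuclideanSpace ℝ (Fin n)

/-- The standard inner product `⟨u, v⟩ = ∑ i, u i * v i`. -/
def dot {n : ℕ} (u v : Vec n) : ℝ := ∑ i, u i * v i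

/-- The `j`-th column of a matrix, as a Euclidean vector. -/
def col {m n : ℕ} (Φ : Matrix (Fin m) (Fin n) ℝ) (j : Fin n) : Vec m :=
  WithLp.toLp 2 fun i => Φ i j

/-- Matrix-vector multiplication `Φ x`, valued in Euclidean space. -/
def mulVec' {m n : ℕ} (Φ : Matrix (Fin m) (Fin n) ℝ) (x : Vec n) : Vec m :=
  WithLp.toLp 2 fun i => ∑ j, Φ i j * x j

/-- The support of a vector, as a `Finset`. -/
def suppF {n : ℕ} (x : Vec n) : Finset (Fin n) :=
  Finset.univ.filter fun i => x i ≠ 0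

/-- Restriction of a vector to an index set (zero outside the set). -/
def restrict {n : ℕ} (x : Vec n) (S : Finset (Fin n)) : Vec n :=
  WithLp.toLp 2 fun i => if i ∈ S then x i else 0

/-- `RIPConst Φ L δ` : δ is the restricted isometry constant of `Φ` of order `L`,
i.e. the smallest `c ≥ 0` such that `(1-c)‖u‖² ≤ ‖Φu‖² ≤ (1+c)‖u‖²` for all
`L`-sparse `u`. -/
def RIPConst {m n : ℕ} (Φ : Matrix (Fin m) (Fin n) ℝ) (L : ℕ) (δ : ℝ) : Prop :=
  IsLeast {c : ℝ | 0 ≤ c ∧ ∀ u : Vec n, (suppF u).card ≤ L →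
    (1 - c) * ‖u‖ ^ 2 ≤ ‖mulVec' Φ u‖ ^ 2 ∧ ‖mulVec' Φ u‖ ^ 2 ≤ (1 + c) * ‖u‖ ^ 2} δ

/-- Signal-to-noise ratio `‖Φx‖²/‖v‖²`. -/
def SNR {m n : ℕ} (Φ : Matrix (Fin m) (Fin n) ℝ) (x : Vec n) (v : Vec m) : ℝ :=
  ‖mulVec' Φ x‖ ^ 2 / ‖v‖ ^ 2

/-- A run of `N` iterations of Orthogonal Matching Pursuit on data `(Φ, y)`:
`idx (k+1) = t^{k+1}` is the index selected at iteration `k+1`, `sets k = T^k`,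
`est k = x^k` and `res k = r^k`. -/
structure OMPRun {m n : ℕ} (Φ : Matrix (Fin m) (Fin n) ℝ) (y : Vec m) (N : ℕ) where
  idx : ℕ → Fin n
  sets : ℕ → Finset (Fin n)
  est : ℕ → Vec n
  res : ℕ → Vec m
  sets_zero : sets 0 = ∅
  est_zero : est 0 = 0
  res_zero : res 0 = y
  idx_not_mem : ∀ k < N, idx (k + 1) ∉ sets k
  idx_max : ∀ k < N, ∀ i : Fin n, i ∉ sets k →
    |dot (col Φ i) (res k)| ≤ |dot (col Φ (idx (k + 1))) (res k)|
  sets_succ : ∀ k < N, sets (k + 1) = insert (idx (k + 1)) (sets k)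
  est_supp : ∀ k < N, suppF (est (k + 1)) ⊆ sets (k + 1)
  est_min : ∀ k < N, ∀ u : Vec n, suppF u ⊆ sets (k + 1) →
    ‖y - mulVec' Φ (est (k + 1))‖ ≤ ‖y - mulVec' Φ u‖
  res_succ : ∀ k < N, res (k + 1) = y - mulVec' Φ (est (k + 1))

/-- The vector `Φᵀ w` restricted to an index set `A` (the vector of correlations
`⟨φ_i, w⟩` for `i ∈ A`, zero outside `A`), as a Euclidean vector. -/
def colDots {m n : ℕ} (Φ : Matrix (Fin m) (Fin n) ℝ) (A : Finset (Fin n)) (w : Vec m) : Vec n :=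
  WithLp.toLp 2 fun i => if i ∈ A then dot (col Φ i) w else 0

/-- The vector `Φᵀ w` of all column correlations, as a plain function (so `‖·‖`
is the sup/ℓ∞ norm). -/
def dualVec {m n : ℕ} (Φ : Matrix (Fin m) (Fin n) ℝ) (w : Vec m) : Fin n → ℝ :=
  fun i => dot (col Φ i) w

/-- `P⊥_S w` : the projection of `w` onto the orthogonal complement of the span
of the columns of `Φ` indexed by `S`. -/
def perpProj {m n : ℕ} (Φ : Matrix (Fin m) (Fin n) ℝ) (S : Finset (Fin n)) (w : Vec m) : Vec m :=
  w - (Submodule.orthogonalProjectionOnto (Submodule.span ℝ (col Φ '' (S : Set (Fin n)))) w : Vec m)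

/-- The `j`-th largest value (1-indexed) among `{|x i| : i ∈ Γ}` (with
multiplicities); `0` if `j > |Γ|` or `j = 0`. -/
def kthLargest {n : ℕ} (x : Vec n) (Γ : Finset (Fin n)) (j : ℕ) : ℝ :=
  if 1 ≤ j ∧ j ≤ Γ.card then
    (Multiset.sort (Γ.val.map fun i => |x i|) (· ≤ ·)).getD (Γ.card - j) 0
  else 0


theorem dot_eq_inner {n : ℕ} (u v : Vec n) : dot u v = inner ℝ u v := by
  simp [dot, PiLp.inner_apply, mul_comm]

theorem dot_mulVec {m n : ℕ} (Φ : Matrix (Fin m) (Fin n) ℝ) (x : Vec n) (y : Vec m) :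
    dot (mulVec' Φ x) y = ∑ i, x i * dot (col Φ i) y := by
  simp only [dot, mulVec', col, Finset.sum_mul, Finset.mul_sum]
  rw [Finset.sum_comm]
  refine Finset.sum_congr rfl fun i _ => Finset.sum_congr rfl fun j _ => ?_
  ring

theorem l1_le {n : ℕ} (x : Vec n) :
    ∑ i, |x i| ≤ Real.sqrt (suppF x).card * ‖x‖ := by
  have h1 : ∑ i, |x i| = ∑ i ∈ suppF x, |x i| := by
    symm
    apply Finset.sum_subset (Finset.subset_univ _)
    intro i _ hi
    simpa [suppF] using hi
  have h2 : ∑ i ∈ suppF x, |x i| ^ 2 ≤ ‖x‖ ^ 2 := by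
    rw [EuclideanSpace.norm_sq_eq]
    simp only [Real.norm_eq_abs]
    exact Finset.sum_le_univ_sum_of_nonneg fun i => by positivity
  have h3 := sq_sum_le_card_mul_sum_sq (s := suppF x) (f := fun i => |x i|)
  rw [h1]
  refine abs_le_of_sq_le_sq' ?_ (by positivity) |>.2
  rw [mul_pow, Real.sq_sqrt (by positivity)]
  exact h3.trans (by gcongr)

/-- lower bound `max_i |⟨φ_i, y⟩| ≥ ((1−δ_K)‖x‖ − √(1+δ_K)‖v‖)/√K`. -/
theorem stmt12 {m n K : ℕ} (Φ : Matrix (Fin m) (Fin n) ℝ) (δ : ℝ)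
    (x : Vec n) (v y : Vec m) (T : Finset (Fin n))
    (hsupp : suppF x = T) (hcard : T.card = K) (hK1 : 1 ≤ K)
    (hRIP : RIPConst Φ K δ) (hδ : δ < 1)
    (hy : y = mulVec' Φ x + v) :
    ∃ i : Fin n,
      (1 / Real.sqrt K) * ((1 - δ) * ‖x‖ - Real.sqrt (1 + δ) * ‖v‖) ≤
        |dot (col Φ i) y| := by
  obtain ⟨⟨hδ0, hR⟩, -⟩ := hRIP
  obtain ⟨hlo, hup⟩ := hR x (by rw [hsupp, hcard])
  have hKpos : (0 : ℝ) < Real.sqrt K := Real.sqrt_pos.2 (by exact_mod_cast hK1)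
  obtain ⟨j, hj⟩ : T.Nonempty := Finset.card_pos.1 (by omega)
  have hxj : x j ≠ 0 := by
    rw [← hsupp] at hj
    simpa [suppF] using hj
  have hx : 0 < ‖x‖ := norm_pos_iff.2 fun h => hxj (by simp [h])
  by_contra! hcon
  set c := (1 / Real.sqrt K) * ((1 - δ) * ‖x‖ - Real.sqrt (1 + δ) * ‖v‖) with hc
  have hcpos : 0 < c := (abs_nonneg _).trans_lt (hcon j)
  have hcK : c * Real.sqrt K = (1 - δ) * ‖x‖ - Real.sqrt (1 + δ) * ‖v‖ := by
    rw [hc]; field_simp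
  have hl1 := l1_le x
  rw [hsupp, hcard] at hl1
  have hupper : dot (mulVec' Φ x) y < c * ∑ i, |x i| := by
    rw [dot_mulVec, Finset.mul_sum]
    have hle : ∀ i, x i * dot (col Φ i) y ≤ |x i| * |dot (col Φ i) y| := fun i => by
      rw [← abs_mul]; exact le_abs_self _
    refine Finset.sum_lt_sum (fun i _ => ?_) ⟨j, Finset.mem_univ j, ?_⟩
    · have := mul_le_mul_of_nonneg_left (hcon i).le (abs_nonneg (x i))
      linarith [hle i]
    · have := mul_lt_mul_of_pos_left (hcon j) (abs_pos.2 hxj)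
      linarith [hle j]
  have hdot : dot (mulVec' Φ x) y = ‖mulVec' Φ x‖ ^ 2 + inner ℝ (mulVec' Φ x) v := by
    rw [dot_eq_inner, hy, inner_add_right, real_inner_self_eq_norm_sq]
  have hcs := neg_le_of_abs_le (abs_real_inner_le_norm (mulVec' Φ x) v)
  have hn : ‖mulVec' Φ x‖ ≤ Real.sqrt (1 + δ) * ‖x‖ := by
    refine (abs_le_of_sq_le_sq' ?_ (by positivity)).2
    rw [mul_pow, Real.sq_sqrt (by linarith)]
    exact hup
  have hnv := mul_le_mul_of_nonneg_right hn (norm_nonneg v)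
  have h1 := mul_le_mul_of_nonneg_left hl1 hcpos.le
  have h2 : c * (Real.sqrt K * ‖x‖) = ((1 - δ) * ‖x‖ - Real.sqrt (1 + δ) * ‖v‖) * ‖x‖ := by
    rw [← hcK]; ring
  nlinarith

end
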